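/- Let M be a d-dimensional affine continuous VASS all of whose transition matrices are non-negative self-loop matrices. If p(u) →^π q(v) is a run, then for every rational α ∈ (0,1] there exists v' ∈ ℚ₊^d with v' ≥ α·v + (1−α)·u componentwise such that p(u) →^{α·π} q(v'). -/

import Mathlib

namespace ACVASS

/-- Vectors of rationals indexed by counters. -/
abbrev Vec (d : ℕ) := Fin d → ℚ

/-- A vector is componentwise non-negative (i.e. lies in ℚ₊^d). -/
def NonNeg {d : ℕ} (u : Vec d) : Prop := ∀ i, 0 ≤ u i

/-- Square integer matrices of dimension d. -/
abbrev Mat (d : ℕ) := Matrix (Fin d) (Fin d) ℤ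

/-- Transitions of a d-dimensional affine continuous VASS. -/
abbrev Trans (Q : Type) (d : ℕ) := Q × Mat d × (Fin d → ℤ) × Q

def Trans.src {Q : Type} {d : ℕ} (t : Trans Q d) : Q := t.1
def Trans.mat {Q : Type} {d : ℕ} (t : Trans Q d) : Mat d := t.2.1
def Trans.upd {Q : Type} {d : ℕ} (t : Trans Q d) : Fin d → ℤ := t.2.2.1
def Trans.tgt {Q : Type} {d : ℕ} (t : Trans Q d) : Q := t.2.2.2

/-- Cast an integer matrix to a rational matrix. -/
def castMat {d : ℕ} (A : Mat d) : Matrix (Fin d) (Fin d) ℚ := A.map (Int.cast)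

/-- Cast an integer vector to a rational vector. -/
def castVec {d : ℕ} (b : Fin d → ℤ) : Vec d := fun i => (b i : ℚ)

/-- A d-dimensional affine continuous VASS: a finite set of transitions. -/
structure ACV (Q : Type) (d : ℕ) where
  T : Finset (Trans Q d)

/-- Configurations: a state together with a vector of counter values. -/
abbrev Conf (Q : Type) (d : ℕ) := Q × Vec d

/-- A step `p(u) →^{αt} q(v)`: `t` is a transition of `M`, `α ∈ (0,1]`, both
configurations are non-negative and `v = A·u + α·b`. -/
def Step {Q : Type} {d : ℕ} (M : ACV Q d) (C : Conf Q d) (α : ℚ) (t : Trans Q d)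
    (C' : Conf Q d) : Prop :=
  t ∈ M.T ∧ 0 < α ∧ α ≤ 1 ∧ C.1 = t.src ∧ C'.1 = t.tgt ∧
    NonNeg C.2 ∧ NonNeg C'.2 ∧
    C'.2 = (castMat t.mat).mulVec C.2 + α • castVec t.upd

/-- Firing sequences. -/
abbrev FSeq (Q : Type) (d : ℕ) := List (ℚ × Trans Q d)

/-- `Run M C π C'` : `C →^π C'`, i.e. the steps of `π` can be realized in order. -/
inductive Run {Q : Type} {d : ℕ} (M : ACV Q d) : Conf Q d → FSeq Q d → Conf Q d → Prop
  | nil (C : Conf Q d) (h : NonNeg C.2) : Run M C [] C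
  | cons {C C' C'' : Conf Q d} {α : ℚ} {t : Trans Q d} {π : FSeq Q d} :
      Step M C α t C' → Run M C' π C'' → Run M C ((α, t) :: π) C''

/-- `C →* C'`. -/
def Reach {Q : Type} {d : ℕ} (M : ACV Q d) (C C' : Conf Q d) : Prop := ∃ π, Run M C π C'

/-- `p(u)` covers `q(v)`: `p(u) →* q(v')` for some `v' ≥ v`. -/
def Covers {Q : Type} {d : ℕ} (M : ACV Q d) (C C' : Conf Q d) : Prop :=
  ∃ v', C'.2 ≤ v' ∧ Reach M C (C'.1, v')

/-- Support of a vector. -/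
def supp {d : ℕ} (u : Vec d) : Set (Fin d) := {i | u i ≠ 0}

/-- `supp_t^-(x) = {y : A(x,y) > 0}`. -/
def suppMinus {Q : Type} {d : ℕ} (t : Trans Q d) (x : Fin d) : Set (Fin d) :=
  {y | 0 < t.mat x y}

/-- `supp_t^+ = {x : b(x) > 0}`. -/
def suppPlus {Q : Type} {d : ℕ} (t : Trans Q d) : Set (Fin d) := {x | 0 < t.upd x}

/-- `supp_t^p(x)`: counters that can pump `x` via transition `t`. -/
def suppPump {Q : Type} {d : ℕ} (t : Trans Q d) (x : Fin d) : Set (Fin d) :=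
  {y | (y ≠ x ∧ 0 < t.mat x y) ∨ (y = x ∧ 1 < t.mat x y)}

/-- The set of transitions occurring in a firing sequence. -/
def seqSupp {Q : Type} {d : ℕ} (π : FSeq Q d) : Set (Trans Q d) := {t | ∃ α, (α, t) ∈ π}

/-- Non-negative matrix. -/
def NonNegMat {d : ℕ} (A : Mat d) : Prop := ∀ i j, 0 ≤ A i j

/-- Non-negative self-loop matrix: non-negative with no zero diagonal entry. -/
def SelfLoopMat {d : ℕ} (A : Mat d) : Prop := NonNegMat A ∧ ∀ i, A i i ≠ 0

/-- All transition matrices of `M` are non-negative. -/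
def NonNegVASS {Q : Type} {d : ℕ} (M : ACV Q d) : Prop := ∀ t ∈ M.T, NonNegMat t.mat

/-- All transition matrices of `M` are non-negative self-loop matrices. -/
def SelfLoopVASS {Q : Type} {d : ℕ} (M : ACV Q d) : Prop := ∀ t ∈ M.T, SelfLoopMat t.mat

/-- `β·π`: scale all fractions of a firing sequence by `β`. -/
def scaleSeq {Q : Type} {d : ℕ} (β : ℚ) (π : FSeq Q d) : FSeq Q d :=
  π.map (fun p => (β * p.1, p.2))

/-- Counter `x` is pumped by transition `t` in the run obtained by firing `π` from `C`:
some step of the run uses `t` from a source configuration `C₁` with a counter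
`y ∈ supp_t^p(x)` of positive value. -/
def PumpedBy {Q : Type} {d : ℕ} (M : ACV Q d) (C : Conf Q d) (π : FSeq Q d)
    (t : Trans Q d) (x : Fin d) : Prop :=
  ∃ (π₁ : FSeq Q d) (α : ℚ) (π₂ : FSeq Q d) (C₁ C₂ : Conf Q d),
    π = π₁ ++ (α, t) :: π₂ ∧ Run M C π₁ C₁ ∧ Step M C₁ α t C₂ ∧
    ∃ y ∈ suppPump t x, 0 < C₁.2 y

/-- Counter `x` is pumped in the run obtained by firing `π` from `C`. -/
def Pumps {Q : Type} {d : ℕ} (M : ACV Q d) (C : Conf Q d) (π : FSeq Q d) (x : Fin d) : Prop :=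
  ∃ t, PumpedBy M C π t x

/-- Edges of the support abstraction `SU_M`. -/
def SuppEdge {Q : Type} {d : ℕ} (M : ACV Q d) (v : Q × Set (Fin d)) (t : Trans Q d)
    (v' : Q × Set (Fin d)) : Prop :=
  t ∈ M.T ∧ v.1 = t.src ∧ v'.1 = t.tgt ∧
    ∀ x : Fin d,
      (t.upd x < 0 → (suppMinus t x ∩ v.2).Nonempty) ∧
      (0 < t.upd x → x ∈ v'.2) ∧
      (x ∈ v'.2 → 0 < t.upd x ∨ (suppMinus t x ∩ v.2).Nonempty)

/-- Directed-path reachability in the support abstraction `SU_M`. -/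
def SuppReach {Q : Type} {d : ℕ} (M : ACV Q d) :
    Q × Set (Fin d) → Q × Set (Fin d) → Prop :=
  Relation.ReflTransGen (fun a b => ∃ t, SuppEdge M a t b)

/-- A step of the continuous VASS `M_X` (only the counters in `X` are tracked). -/
def StepX {Q : Type} {d : ℕ} (M : ACV Q d) (X : Set (Fin d)) (p : Q) (u : Vec d) (α : ℚ)
    (t : Trans Q d) (q : Q) (v : Vec d) : Prop :=
  t ∈ M.T ∧ 0 < α ∧ α ≤ 1 ∧ p = t.src ∧ q = t.tgt ∧
    (∀ i ∈ X, 0 ≤ u i) ∧ (∀ i ∈ X, 0 ≤ v i) ∧ (∀ i ∈ X, v i = u i + α * castVec t.upd i)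

/-- A run of the continuous VASS `M_X`; vectors matter only on the counters of `X`. -/
inductive RunX {Q : Type} {d : ℕ} (M : ACV Q d) (X : Set (Fin d)) :
    Q → Vec d → FSeq Q d → Q → Vec d → Prop
  | nil (p : Q) (u v : Vec d) (h : ∀ i ∈ X, 0 ≤ u i ∧ u i = v i) : RunX M X p u [] p v
  | cons {p r q : Q} {u w v : Vec d} {α : ℚ} {t : Trans Q d} {π : FSeq Q d} :
      StepX M X p u α t r w → RunX M X r w π q v → RunX M X p u ((α, t) :: π) q v

/-- One edge of the graph `G_M` using only transitions from `S`. -/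
def GStep {Q : Type} {d : ℕ} (S : Set (Trans Q d)) (a b : Q) : Prop :=
  ∃ t ∈ S, t.src = a ∧ t.tgt = b

/-- A (possibly empty) path in the graph `G_M` using only transitions from `S`. -/
def GPath {Q : Type} {d : ℕ} (S : Set (Trans Q d)) : Q → Q → Prop :=
  Relation.ReflTransGen (GStep S)

/-- `Rep-Half(π)`: the i-th fraction of `π` is divided by `2^i`. -/
def repHalf {Q : Type} {d : ℕ} : FSeq Q d → FSeq Q d
  | [] => []
  | (α, t) :: rest => (α / 2, t) :: scaleSeq (1 / 2) (repHalf rest)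

/-- Descending partial product `A_{ℓ-1} ⋯ A_j` (0-indexed); for `j = ℓ` this is
the identity matrix. -/
def descProd {d ℓ : ℕ} (A : Fin ℓ → Matrix (Fin d) (Fin d) ℚ) (j : ℕ) :
    Matrix (Fin d) (Fin d) ℚ :=
  (((List.finRange ℓ).drop j).reverse.map A).prod

/-- The permutation matrix `P_σ` with `P_σ(i,j) = 1` iff `σ(i) = j`. -/
def permMat {n : ℕ} (σ : Equiv.Perm (Fin n)) : Matrix (Fin n) (Fin n) ℤ :=
  Matrix.of fun i j => if σ i = j then 1 else 0

/-- A matrix is a permutation matrix. -/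
def IsPermMat {d : ℕ} (A : Mat d) : Prop := ∃ σ : Equiv.Perm (Fin d), A = permMat σ

/-- The n×n block-diagonal matrix with blocks `I_o`, `A`, `I_{n-o-k}`:
`A` occupies rows/columns `o,…,o+k-1` and the rest is identity. -/
def applyBlock {k : ℕ} (A : Matrix (Fin k) (Fin k) ℤ) (o n : ℕ) :
    Matrix (Fin n) (Fin n) ℤ :=
  Matrix.of fun r c =>
    if h : o ≤ r.val ∧ r.val < o + k ∧ o ≤ c.val ∧ c.val < o + k then
      A ⟨r.val - o, by omega⟩ ⟨c.val - o, by omega⟩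
    else if r.val = c.val then 1 else 0

/-- Transitions of a continuous VASS (with identity matrices left implicit). -/
abbrev CTrans (Q : Type) (d : ℕ) := Q × (Fin d → ℤ) × Q

/-- Zero-tests. -/
abbrev ZTest (Q : Type) (d : ℕ) := Q × Fin d × Q

/-- A d-dimensional continuous VASS with zero-tests. -/
structure CVZ (Q : Type) (d : ℕ) where
  T : Finset (CTrans Q d)
  T0 : Finset (ZTest Q d)

/-- A transition step of a continuous VASS with zero-tests. -/
def CStep {Q : Type} {d : ℕ} (M : CVZ Q d) (C : Conf Q d) (α : ℚ) (t : CTrans Q d)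
    (C' : Conf Q d) : Prop :=
  t ∈ M.T ∧ 0 < α ∧ α ≤ 1 ∧ C.1 = t.1 ∧ C'.1 = t.2.2 ∧
    NonNeg C.2 ∧ NonNeg C'.2 ∧ C'.2 = C.2 + α • castVec t.2.1

/-- A zero-test step of a continuous VASS with zero-tests. -/
def ZStep {Q : Type} {d : ℕ} (M : CVZ Q d) (C : Conf Q d) (t : ZTest Q d)
    (C' : Conf Q d) : Prop :=
  t ∈ M.T0 ∧ C.1 = t.1 ∧ C'.1 = t.2.2 ∧ NonNeg C.2 ∧ C.2 t.2.1 = 0 ∧ C'.2 = C.2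

/-- A d-dimensional continuous VASS. -/
structure CV (Q : Type) (d : ℕ) where
  T : Finset (CTrans Q d)

/-- A step of a continuous VASS. -/
def CVStep {Q : Type} {d : ℕ} (M : CV Q d) (C : Conf Q d) (α : ℚ) (t : CTrans Q d)
    (C' : Conf Q d) : Prop :=
  t ∈ M.T ∧ 0 < α ∧ α ≤ 1 ∧ C.1 = t.1 ∧ C'.1 = t.2.2 ∧
    NonNeg C.2 ∧ NonNeg C'.2 ∧ C'.2 = C.2 + α • castVec t.2.1

/-- Reachability (`→*`) in a continuous VASS. -/
def CVReach {Q : Type} {d : ℕ} (M : CV Q d) : Conf Q d → Conf Q d → Prop :=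
  Relation.ReflTransGen (fun C C' => ∃ α t, CVStep M C α t C')

/-! Keep the offset `e = (1 - α) • u` as an invariant along the run: if the scaled run currently
dominates `α • u + e` with `e ≥ 0`, then firing `αβt` preserves this, because a matrix with
non-negative entries and diagonal at least `1` is monotone and satisfies `e ≤ A e`, so
`α (A u + β b) + e ≤ A (α u + e) + αβ b`. -/

section MulVec

variable {m n R : Type*} [Fintype n] [Semiring R] [PartialOrder R] [IsOrderedRing R]

theorem mulVec_mono_of_nonneg {A : Matrix m n R} (hA : ∀ i j, 0 ≤ A i j)
    {u v : n → R} (huv : u ≤ v) : A.mulVec u ≤ A.mulVec v := fun i =>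
  dotProduct_le_dotProduct_of_nonneg_left huv (hA i)

theorem le_mulVec_of_one_le_diag {A : Matrix n n R} (hA : ∀ i j, 0 ≤ A i j)
    (hdiag : ∀ i, 1 ≤ A i i) {e : n → R} (he : 0 ≤ e) : e ≤ A.mulVec e := fun i =>
  calc e i ≤ A i i * e i := le_mul_of_one_le_left (he i) (hdiag i)
    _ ≤ ∑ j, A i j * e j :=
      Finset.single_le_sum (f := fun j => A i j * e j)
        (fun j _ => mul_nonneg (hA i j) (he j)) (Finset.mem_univ i)

end MulVec

section Runs

variable {Q : Type} {d : ℕ}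

theorem SelfLoopMat.castMat_nonneg {A : Mat d} (hA : SelfLoopMat A) (i j : Fin d) :
    0 ≤ castMat A i j :=
  Int.cast_nonneg (hA.1 i j)

theorem SelfLoopMat.one_le_castMat_diag {A : Mat d} (hA : SelfLoopMat A) (i : Fin d) :
    1 ≤ castMat A i i :=
  Int.cast_one_le_of_pos ((hA.1 i i).lt_of_ne' (hA.2 i))

theorem SelfLoopMat.smul_mulVec_add_le {A : Mat d} (hA : SelfLoopMat A) {α : ℚ}
    {u e w : Vec d} (he : 0 ≤ e) (hw : α • u + e ≤ w) :
    α • (castMat A).mulVec u + e ≤ (castMat A).mulVec w :=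
  calc α • (castMat A).mulVec u + e
      ≤ α • (castMat A).mulVec u + (castMat A).mulVec e := by
        gcongr
        exact le_mulVec_of_one_le_diag hA.castMat_nonneg hA.one_le_castMat_diag he
    _ = (castMat A).mulVec (α • u + e) := by rw [Matrix.mulVec_add, Matrix.mulVec_smul]
    _ ≤ (castMat A).mulVec w := mulVec_mono_of_nonneg hA.castMat_nonneg hw

variable {M : ACV Q d} {C C' : Conf Q d}

theorem Run.nonneg_start {π : FSeq Q d} (hrun : Run M C π C') : NonNeg C.2 := by
  cases hrun with
  | nil _ h => exact h
  | cons hstep _ =>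
    obtain ⟨-, -, -, -, -, h, -⟩ := hstep
    exact h

theorem Run.nonneg_end {π : FSeq Q d} (hrun : Run M C π C') : NonNeg C'.2 := by
  induction hrun with
  | nil _ h => exact h
  | cons _ _ ih => exact ih

theorem nonneg_of_smul_add_le {α : ℚ} {u e w : Vec d} (hα : 0 ≤ α) (he : 0 ≤ e)
    (hu : NonNeg u) (hw : α • u + e ≤ w) : NonNeg w :=
  (add_nonneg (smul_nonneg hα hu) he).trans hw

theorem Step.exists_scale_of_le {t : Trans Q d} {α β : ℚ} {e w : Vec d}
    (ht : SelfLoopMat t.mat) (hα0 : 0 < α) (hα1 : α ≤ 1) (he : 0 ≤ e)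
    (hstep : Step M C β t C') (hw : α • C.2 + e ≤ w) :
    ∃ w', α • C'.2 + e ≤ w' ∧ Step M (C.1, w) (α * β) t (C'.1, w') := by
  obtain ⟨htM, hβ0, hβ1, hsrc, htgt, hC, hC', hfire⟩ := hstep
  have hw' : α • C'.2 + e ≤ (castMat t.mat).mulVec w + (α * β) • castVec t.upd :=
    calc α • C'.2 + e
        = (α • (castMat t.mat).mulVec C.2 + e) + (α * β) • castVec t.upd := by
          rw [hfire]; module
      _ ≤ (castMat t.mat).mulVec w + (α * β) • castVec t.upd := by
          gcongr
          exact ht.smul_mulVec_add_le he hw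
  exact ⟨_, hw', htM, mul_pos hα0 hβ0, mul_le_one₀ hα1 hβ0.le hβ1, hsrc, htgt,
    nonneg_of_smul_add_le hα0.le he hC hw, nonneg_of_smul_add_le hα0.le he hC' hw', rfl⟩

theorem Run.exists_scaleSeq_of_le (hM : SelfLoopVASS M) {α : ℚ} (hα0 : 0 < α) (hα1 : α ≤ 1)
    {e w : Vec d} (he : 0 ≤ e) {π : FSeq Q d} (hrun : Run M C π C') (hw : α • C.2 + e ≤ w) :
    ∃ w', α • C'.2 + e ≤ w' ∧ Run M (C.1, w) (scaleSeq α π) (C'.1, w') := by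
  induction hrun generalizing w with
  | nil C hC => exact ⟨w, hw, Run.nil _ (nonneg_of_smul_add_le hα0.le he hC hw)⟩
  | cons hstep _ ih =>
    obtain ⟨w₁, hw₁, hstep'⟩ := hstep.exists_scale_of_le (hM _ hstep.1) hα0 hα1 he hw
    obtain ⟨w', hw', hrun'⟩ := ih hw₁
    exact ⟨w', hw', Run.cons hstep' hrun'⟩

end Runs

theorem run_scale_same_start_general
    {Q : Type} {d : ℕ} (M : ACV Q d) (hM : SelfLoopVASS M)
    (p q : Q) (u v : Vec d) (π : FSeq Q d) (hrun : Run M (p, u) π (q, v))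
    (α : ℚ) (hα0 : 0 < α) (hα1 : α ≤ 1) :
    ∃ v' : Vec d, NonNeg v' ∧ α • v + (1 - α) • u ≤ v' ∧
      Run M (p, u) (scaleSeq α π) (q, v') := by
  have offset_nonneg : 0 ≤ (1 - α) • u := smul_nonneg (sub_nonneg.2 hα1) hrun.nonneg_start
  have start_eq : α • u + (1 - α) • u = u := by module
  obtain ⟨v', hv', hrun'⟩ := hrun.exists_scaleSeq_of_le hM hα0 hα1 offset_nonneg start_eq.le
  exact ⟨v', hrun'.nonneg_end, hv', hrun'⟩

/-- firing a scaled-down sequence from the same start. -/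
theorem run_scale_same_start
    {Q : Type} [Fintype Q] {d : ℕ} (M : ACV Q d) (hM : SelfLoopVASS M)
    (p q : Q) (u v : Vec d) (π : FSeq Q d) (hrun : Run M (p, u) π (q, v))
    (α : ℚ) (hα0 : 0 < α) (hα1 : α ≤ 1) :
    ∃ v' : Vec d, NonNeg v' ∧ α • v + (1 - α) • u ≤ v' ∧
      Run M (p, u) (scaleSeq α π) (q, v') :=
  run_scale_same_start_general M hM p q u v π hrun α hα0 hα1

end ACVASS
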